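/- Let M be a matroid on a finite ground set E with rank r, let k ≥ 2, and let f : (k+1)^E → ℝ be a (possibly non-monotone) k-submodular function. Then the optimization problem max{ f(p) : p ∈ (k+1)^E, supp(p) independent in M } has an optimal solution whose support is a basis of M, i.e., there exists p* with supp(p*) independent, |supp(p*)| = r, and f(p*) ≥ f(p) for every p with supp(p) independent. -/

import Mathlib

/-- The support of `p : E → Fin (k+1)`: elements assigned a nonzero label. -/
def kSupp {E : Type*} [Fintype E] [DecidableEq E] {k : ℕ}
    (p : E → Fin (k+1)) : Finset E :=
  Finset.univ.filter (fun e => p e ≠ 0)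

/-- The meet `p ⊓ q`. -/
def kInf {E : Type*} {k : ℕ} (p q : E → Fin (k+1)) : E → Fin (k+1) :=
  fun e => if p e = q e then p e else 0

/-- The join `p ⊔ q`. -/
def kSup {E : Type*} {k : ℕ} (p q : E → Fin (k+1)) : E → Fin (k+1) :=
  fun e => if q e = 0 ∨ q e = p e then p e else if p e = 0 then q e else 0

/-- `f` is `k`-submodular. -/
def IsKSubmodular {E : Type*} {k : ℕ} (f : (E → Fin (k+1)) → ℝ) : Prop :=
  ∀ p q, f (kSup p q) + f (kInf p q) ≤ f p + f q

/-- The partial order `p ⪯ q`. -/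
def kLE {E : Type*} {k : ℕ} (p q : E → Fin (k+1)) : Prop :=
  ∀ e, p e ≠ 0 → p e = q e

/-- Marginal gain `Δ_{e,i} f(p) = f(p + i·1_e) − f(p)`. -/
def marg {E : Type*} [DecidableEq E] {k : ℕ}
    (f : (E → Fin (k+1)) → ℝ) (p : E → Fin (k+1)) (e : E) (i : Fin (k+1)) : ℝ :=
  f (Function.update p e i) - f p

/-- Orthant submodularity. -/
def OrthantSubmodular {E : Type*} [DecidableEq E] {k : ℕ}
    (f : (E → Fin (k+1)) → ℝ) : Prop :=
  ∀ (p q : E → Fin (k+1)) (e : E) (i : Fin (k+1)),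
    kLE p q → q e = 0 → i ≠ 0 → marg f q e i ≤ marg f p e i

/-- Pairwise monotonicity. -/
def PairwiseMonotone {E : Type*} [DecidableEq E] {k : ℕ}
    (f : (E → Fin (k+1)) → ℝ) : Prop :=
  ∀ (p : E → Fin (k+1)) (e : E) (i j : Fin (k+1)),
    p e = 0 → i ≠ 0 → j ≠ 0 → i ≠ j → 0 ≤ marg f p e i + marg f p e j

/-- Monotonicity of `f` with respect to `⪯`. -/
def KMonotone {E : Type*} {k : ℕ} (f : (E → Fin (k+1)) → ℝ) : Prop :=
  ∀ p q, kLE p q → f p ≤ f q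

/-! Two extensions of `p` by distinct labels at an unassigned element have both join and meet equal
to `p`, so `k`-submodularity makes their marginal gains sum to a nonnegative number and one of them
does not decrease `f`. Hence any feasible support can be enlarged to a maximal one at no cost. -/

section Update

variable {E : Type*} [DecidableEq E] {k : ℕ} {p : E → Fin (k + 1)} {e : E} {i j : Fin (k + 1)}

theorem kSupp_update_of_ne_zero [Fintype E] (p : E → Fin (k + 1)) (e : E) (hi : i ≠ 0) :
    kSupp (Function.update p e i) = insert e (kSupp p) := by
  ext x
  obtain rfl | hx := eq_or_ne x e <;> simp [kSupp, *]

theorem kInf_update_update (he : p e = 0) (hij : i ≠ j) :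
    kInf (Function.update p e i) (Function.update p e j) = p := by
  funext x
  obtain rfl | hx := eq_or_ne x e <;> simp [kInf, *]

theorem kSup_update_update (he : p e = 0) (hi : i ≠ 0) (hj : j ≠ 0) (hij : i ≠ j) :
    kSup (Function.update p e i) (Function.update p e j) = p := by
  funext x
  obtain rfl | hx := eq_or_ne x e
  · simp [kSup, he, hi, hj, hij.symm]
  · simp [kSup, hx]

end Update

theorem IsKSubmodular.pairwiseMonotone {E : Type*} [DecidableEq E] {k : ℕ}
    {f : (E → Fin (k + 1)) → ℝ} (hf : IsKSubmodular f) : PairwiseMonotone f := by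
  intro p e i j he hi hj hij
  have h := hf (Function.update p e i) (Function.update p e j)
  rw [kSup_update_update he hi hj hij, kInf_update_update he hij] at h
  unfold marg
  linarith

namespace PairwiseMonotone

variable {E : Type*} [DecidableEq E] {k : ℕ} {f : (E → Fin (k + 1)) → ℝ}

theorem exists_le_update (hf : PairwiseMonotone f) (hk : 2 ≤ k) {p : E → Fin (k + 1)} {e : E}
    (he : p e = 0) : ∃ i ≠ 0, f p ≤ f (Function.update p e i) := by
  obtain ⟨i, j, hi, hj, hij⟩ : ∃ i j : Fin (k + 1), i ≠ 0 ∧ j ≠ 0 ∧ i ≠ j :=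
    ⟨⟨1, by lia⟩, ⟨2, by lia⟩, by simp [Fin.ext_iff]⟩
  have hsum : 0 ≤ marg f p e i + marg f p e j := hf p e i j he hi hj hij
  unfold marg at hsum
  by_contra! hlt
  linarith [hlt i hi, hlt j hj]

variable [Fintype E]

theorem exists_kSupp_eq_union (hf : PairwiseMonotone f) (hk : 2 ≤ k) (p : E → Fin (k + 1))
    (T : Finset E) : ∃ q, kSupp q = kSupp p ∪ T ∧ f p ≤ f q := by
  induction T using Finset.induction_on with
  | empty => exact ⟨p, by simp, le_rfl⟩
  | insert e T _ ih =>
    obtain ⟨q, hq, hpq⟩ := ih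
    rw [Finset.union_insert, ← hq]
    by_cases he : q e = 0
    · obtain ⟨i, hi, hqi⟩ := hf.exists_le_update hk he
      exact ⟨Function.update q e i, kSupp_update_of_ne_zero q e hi, hpq.trans hqi⟩
    · exact ⟨q, (Finset.insert_eq_of_mem (by simpa [kSupp] using he)).symm, hpq⟩

theorem exists_kSupp_eq_of_subset (hf : PairwiseMonotone f) (hk : 2 ≤ k) {p : E → Fin (k + 1)}
    {S : Set E} (hS : ↑(kSupp p) ⊆ S) : ∃ q, (kSupp q : Set E) = S ∧ f p ≤ f q := by
  lift S to Finset E using S.toFinite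
  obtain ⟨q, hq, hpq⟩ := hf.exists_kSupp_eq_union hk p S
  rw [Finset.union_eq_right.mpr (Finset.coe_subset.mp hS)] at hq
  exact ⟨q, congrArg _ hq, hpq⟩

end PairwiseMonotone

theorem kSubmodular_matroid_max_on_base_general
    {E : Type*} [Fintype E] [DecidableEq E] {k : ℕ} (hk : 2 ≤ k)
    {ℱ : Set (Set E)} (hℱ : ℱ.Nonempty)
    {f : (E → Fin (k + 1)) → ℝ} (hf : PairwiseMonotone f) :
    ∃ p : E → Fin (k + 1), Maximal (· ∈ ℱ) (kSupp p : Set E) ∧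
      ∀ q : E → Fin (k + 1), ↑(kSupp q) ∈ ℱ → f q ≤ f p := by
  obtain ⟨S, hS⟩ := hℱ
  obtain ⟨p₀, rfl, -⟩ := hf.exists_kSupp_eq_of_subset hk (p := 0) (S := S) (by simp [kSupp])
  obtain ⟨p, hp, hmax⟩ := Set.exists_max_image
    {q : E → Fin (k + 1) | (kSupp q : Set E) ∈ ℱ} f (Set.toFinite _) ⟨p₀, hS⟩
  obtain ⟨B, hpB, hB⟩ := ℱ.toFinite.exists_le_maximal hp
  obtain ⟨p', rfl, hpp'⟩ := hf.exists_kSupp_eq_of_subset hk hpB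
  exact ⟨p', hB, fun q hq => (hmax q hq).trans hpp'⟩

/-- maximizing a (possibly non-monotone) `k`-submodular function
(`k ≥ 2`) over independent supports has an optimal solution whose support is a
base (of size the rank `r`). -/
theorem kSubmodular_matroid_max_on_base
    {E : Type*} [Fintype E] [DecidableEq E] {k : ℕ} (hk : 2 ≤ k)
    (M : Matroid E) (r : ℕ) (hr : ∀ B : Set E, M.IsBase B → B.ncard = r)
    (f : (E → Fin (k+1)) → ℝ) (hf : IsKSubmodular f) :
    ∃ p : E → Fin (k+1), M.Indep ↑(kSupp p) ∧ (kSupp p).card = r ∧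
      ∀ q : E → Fin (k+1), M.Indep ↑(kSupp q) → f q ≤ f p := by
  obtain ⟨p, hp, hmax⟩ := kSubmodular_matroid_max_on_base_general hk
    ⟨∅, M.empty_indep⟩ (ℱ := {I | M.Indep I}) hf.pairwiseMonotone
  have hB : M.IsBase ↑(kSupp p) := M.isBase_iff_maximal_indep.mpr hp
  exact ⟨p, hB.indep, (Set.ncard_coe_finset _).symm.trans (hr _ hB), hmax⟩
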